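/- arXiv:2505.18626 — 2 statements merged into one kernel-verified Lean document; each statement's English description precedes it below -/
import Mathlib

section
/- Every regular ω-language F ⊆ X^ω has the Automatic Baire property. -/
open Set MeasureTheory Computability

namespace AutoBaire

/-- The Cantor topology on the space of ω-words over `X`:
the product of the discrete topology on `X`. -/
def cantorTop (X : Type) : TopologicalSpace (ℕ → X) :=
  @Pi.topologicalSpace ℕ (fun _ => X) (fun _ => ⊥)

/-- The Borel σ-algebra of the Cantor space. -/
def cantorBorel (X : Type) : MeasurableSpace (ℕ → X) :=
  @borel (ℕ → X) (cantorTop X)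

variable {X : Type}

/-- Concatenation `w·ξ` of a finite word with an ω-word. -/
def wcat (w : List X) (ξ : ℕ → X) : ℕ → X :=
  Stream'.appendStream' w ξ

/-- The ball (cylinder) `w·X^ω`. -/
def cyl (w : List X) : Set (ℕ → X) := {ξ | ∃ η : ℕ → X, ξ = wcat w η}

/-- The ω-language `W·A` for a language `W` and an ω-language `A`. -/
def catOmega (W : Language X) (A : Set (ℕ → X)) : Set (ℕ → X) :=
  {ξ | ∃ w ∈ W, ∃ η ∈ A, ξ = wcat w η}

/-- `V^ω`: the set of ω-words that are infinite concatenations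
`v₁·v₂·⋯` of non-empty words `vᵢ ∈ V`. -/
def omegaPow (V : Language X) : Set (ℕ → X) :=
  {ξ | ∃ f : ℕ → List X, (∀ i, f i ∈ V ∧ f i ≠ []) ∧
    ∀ k, ξ ∈ cyl (((List.range k).map f).flatten)}

/-- Regular languages: those obtained from finite languages via the operations
union, concatenation and star. -/
inductive IsRegLang : Language X → Prop
  | finite (W : Language X) : (W : Set (List X)).Finite → IsRegLang W
  | union (W V : Language X) : IsRegLang W → IsRegLang V → IsRegLang (W + V)
  | concat (W V : Language X) : IsRegLang W → IsRegLang V → IsRegLang (W * V)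
  | star (W : Language X) : IsRegLang W → IsRegLang (W∗)

/-- Regular ω-languages: finite unions `⋃ᵢ Wᵢ·Vᵢ^ω` with `Wᵢ, Vᵢ` regular. -/
def IsRegOmega (F : Set (ℕ → X)) : Prop :=
  ∃ (n : ℕ) (W V : Fin n → Language X),
    (∀ i, IsRegLang (W i) ∧ IsRegLang (V i)) ∧
    F = ⋃ i, catOmega (W i) (omegaPow (V i))

/-- `X*·w·X^ω`: the set of ω-words containing `w` as an infix. -/
def infixOcc (w : List X) : Set (ℕ → X) :=
  {ξ | ∃ u : List X, ξ ∈ cyl (u ++ w)}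

/-- An ω-word is disjunctive if every finite word occurs in it as an infix. -/
def Disjunctive (ξ : ℕ → X) : Prop := ∀ w : List X, ξ ∈ infixOcc w

/-- Ultimately periodic ω-words: `ξ = w·v·v·v·⋯` with `v ≠ e`. -/
def UltPeriodic (ξ : ℕ → X) : Prop :=
  ∃ (w v : List X) (h : v ≠ []), ξ = wcat w (Stream'.cycle v h)

/-- The Automatic Baire property: `F Δ E ⊆ F'` for some regular open
ω-language `E` and some regular ω-language `F'` of first Baire category. -/
def HasABP (F : Set (ℕ → X)) : Prop :=
  ∃ E F' : Set (ℕ → X),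
    IsRegOmega E ∧ @IsOpen _ (cantorTop X) E ∧
    IsRegOmega F' ∧ @IsMeagre _ (cantorTop X) F' ∧
    symmDiff F E ⊆ F'

/-- The measure is finite and non-null: `0 < μ(X^ω) < ∞`. -/
def FiniteNonNull (μ : @MeasureTheory.Measure (ℕ → X) (cantorBorel X)) : Prop :=
  0 < μ Set.univ ∧ μ Set.univ < ⊤

/-- `supp(μ) = X^ω`: every non-empty open set has positive measure. -/
def FullSupport (μ : @MeasureTheory.Measure (ℕ → X) (cantorBorel X)) : Prop :=
  ∀ U : Set (ℕ → X), @IsOpen _ (cantorTop X) U → U.Nonempty → 0 < μ U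

/-- The balance condition: there is `c > 0` such that for all `w ∈ X*`, `x ∈ X`
either `μ(wx·X^ω) = 0` or `c·μ(w·X^ω) ≤ μ(wx·X^ω)`. -/
def Balanced (μ : @MeasureTheory.Measure (ℕ → X) (cantorBorel X)) : Prop :=
  ∃ c : ENNReal, 0 < c ∧ ∀ (w : List X) (x : X),
    μ (cyl (w ++ [x])) = 0 ∨ c * μ (cyl w) ≤ μ (cyl (w ++ [x]))

/-!
It is enough to approximate each `V^ω` by an open set `U·X^ω` with `U` regular, up to a set
`X*·(X^|w| ∖ {w})^ω`: such exceptional sets absorb left factors, so the approximation passes to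
`W·V^ω` and to finite unions. They are meagre, because any word can be extended by an occurrence of
`w` aligned with the blocks, and outside of them every tail of an ω-word contains `w`.

Whether `V^ω` meets a cylinder `u·X^ω` depends only on the left quotient of `V*` by `u`. There are
finitely many of these, so one word `w` can serve all `u` at once. If every cylinder contains a
cylinder disjoint from `V^ω`, choose `w` such that `V^ω` misses `u·w·X^ω` for all `u`, and take
`U = ∅`. Otherwise `V^ω` is dense in some `p·X^ω`. Choose `w` such that for every `u` either `V^ω`
misses `u·w·X^ω`, or `u·w` has a prefix `x·p` with `x ∈ V*` nonempty, and take `U = V*·p`. By the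
density, an ω-word in `U·X^ω` never falls under the first alternative, so as long as `w` keeps
occurring a first factor from `V` can be split off, leaving a tail of the same kind; repeating this
forever factorizes the ω-word over `V`.
-/

section RegularLanguages

variable {α : Type*} {L M : Language α} {u z : List α}

lemma isRegular_of_finite (hL : (L : Set (List α)).Finite) : L.IsRegular := by
  have hsuffix : {s | ∃ w ∈ L, s <:+ w}.Finite := by
    refine (hL.biUnion fun w _ => List.finite_toSet w.tails).subset ?_
    rintro s ⟨w, hw, hs⟩
    exact Set.mem_biUnion hw ((List.mem_tails _ _).2 hs)
  refine .of_finite_range_leftQuotient (hsuffix.finite_subsets.subset ?_)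
  rintro _ ⟨u, rfl⟩ s hs
  exact ⟨u ++ s, hs, List.suffix_append u s⟩

lemma mem_sSup_language {T : Set (Language α)} : z ∈ sSup T ↔ ∃ K ∈ T, z ∈ K :=
  Iff.rfl

lemma leftQuotient_mul (L M : Language α) (u : List α) :
    (L * M).leftQuotient u =
      L.leftQuotient u * M + sSup {K | ∃ x ∈ L, ∃ y, x ++ y = u ∧ M.leftQuotient y = K} := by
  ext z
  simp only [Language.mem_add, Language.mem_mul, Language.mem_leftQuotient, mem_sSup_language]
  constructor
  · rintro ⟨a, ha, b, hb, hab⟩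
    rcases List.append_eq_append_iff.1 hab with ⟨c, rfl, rfl⟩ | ⟨c, rfl, rfl⟩
    · exact Or.inr ⟨_, ⟨a, ha, c, rfl, rfl⟩, hb⟩
    · exact Or.inl ⟨c, ha, b, hb, rfl⟩
  · rintro (⟨a, ha, b, hb, rfl⟩ | ⟨_, ⟨x, hx, y, rfl, rfl⟩, hz⟩)
    · exact ⟨u ++ a, ha, b, hb, List.append_assoc ..⟩
    · exact ⟨x, hx, y ++ z, hz, (List.append_assoc ..).symm⟩

lemma isRegular_mul (hL : L.IsRegular) (hM : M.IsRegular) : (L * M).IsRegular := by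
  refine .of_finite_range_leftQuotient <|
    (hL.finite_range_leftQuotient.image2 (fun K T => K * M + sSup T)
      hM.finite_range_leftQuotient.finite_subsets).subset ?_
  rintro _ ⟨u, rfl⟩
  refine ⟨_, ⟨u, rfl⟩, _, ?_, (leftQuotient_mul L M u).symm⟩
  rintro _ ⟨-, -, y, -, rfl⟩
  exact ⟨y, rfl⟩

lemma append_mem_kstar {x y : List α} (hx : x ∈ L∗) (hy : y ∈ L∗) : x ++ y ∈ L∗ := by
  rw [← kstar_mul_kstar L]
  exact Language.append_mem_mul hx hy

lemma mem_kstar_of_mem (hu : u ∈ L) : u ∈ L∗ :=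
  le_kstar (a := L) hu

lemma exists_mem_of_append_mem_kstar (hu : u ≠ []) (h : u ++ z ∈ L∗) :
    ∃ x ∈ L∗, ∃ y, x ++ y = u ∧ z ∈ L.leftQuotient y * L∗ := by
  obtain ⟨S, hS, hSL⟩ := Language.mem_kstar.1 h
  rcases List.append_eq_flatten_iff.1 hS with
    ⟨as, bs, rfl, rfl, rfl⟩ | ⟨as, y, c, cs, ds, rfl, rfl, rfl⟩
  · obtain rfl | ⟨as, y, rfl⟩ := as.eq_nil_or_concat'
    · exact absurd rfl hu
    · simp only [List.mem_append, List.mem_singleton] at hSL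
      have hy : [] ∈ L.leftQuotient y := by
        simpa only [Language.mem_leftQuotient, List.append_nil] using hSL y (by simp)
      exact ⟨as.flatten, Language.join_mem_kstar (by grind), y, by simp,
        [], hy, bs.flatten, Language.join_mem_kstar (by grind), rfl⟩
  · simp only [List.mem_append, List.mem_cons] at hSL
    exact ⟨as.flatten, Language.join_mem_kstar (by grind), y, rfl,
      c :: cs, hSL _ (by simp), ds.flatten, Language.join_mem_kstar (by grind), rfl⟩

lemma leftQuotient_kstar (L : Language α) (hu : u ≠ []) :
    (L∗).leftQuotient u = sSup {K | ∃ x ∈ L∗, ∃ y, x ++ y = u ∧ L.leftQuotient y = K} * L∗ := by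
  ext z
  simp only [Language.mem_leftQuotient, Language.mem_mul, mem_sSup_language]
  constructor
  · intro h
    obtain ⟨x, hx, y, hxy, a, ha, b, hb, hab⟩ := exists_mem_of_append_mem_kstar hu h
    exact ⟨a, ⟨_, ⟨x, hx, y, hxy, rfl⟩, ha⟩, b, hb, hab⟩
  · rintro ⟨a, ⟨_, ⟨x, hx, y, rfl, rfl⟩, ha⟩, b, hb, rfl⟩
    have hya : y ++ a ∈ L∗ := mem_kstar_of_mem ha
    simpa only [List.append_assoc] using append_mem_kstar hx (append_mem_kstar hya hb)

lemma isRegular_kstar (hL : L.IsRegular) : (L∗).IsRegular := by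
  refine .of_finite_range_leftQuotient <|
    ((hL.finite_range_leftQuotient.finite_subsets.image fun T => sSup T * L∗).insert L∗).subset ?_
  rintro _ ⟨u, rfl⟩
  rcases eq_or_ne u [] with rfl | hu
  · exact Or.inl rfl
  · refine Or.inr ⟨_, ?_, (leftQuotient_kstar L hu).symm⟩
    rintro _ ⟨-, -, y, -, rfl⟩
    exact ⟨y, rfl⟩

lemma exists_mem_append_eq_of_mem_kstar (hu : u ∈ L∗) (hne : u ≠ []) :
    ∃ v ∈ L - 1, ∃ y ∈ L∗, v ++ y = u := by
  obtain ⟨S, rfl, hS⟩ := Language.mem_kstar_iff_exists_nonempty.1 hu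
  cases S with
  | nil => exact absurd rfl hne
  | cons v S =>
    simp only [List.mem_cons, forall_eq_or_imp] at hS
    exact ⟨v, hS.1, S.flatten, Language.join_mem_kstar fun y hy => (hS.2 y hy).1, rfl⟩

/- The word is built by running through the finitely many left quotients: extending it for one
quotient keeps the property already secured for the others, by monotonicity. -/
lemma exists_forall_append_of_isRegular (hL : L.IsRegular) {P : List α → Prop}
    (hP : ∀ u t, P u → P (u ++ t))
    (hext : ∀ u, ∃ t, ∀ u', L.leftQuotient u' = L.leftQuotient u → P (u' ++ t)) :
    ∃ w, ∀ u, P (u ++ w) := by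
  suffices h : ∀ s : Set (Language α), s.Finite → s ⊆ Set.range L.leftQuotient →
      ∃ w, ∀ u, L.leftQuotient u ∈ s → P (u ++ w) by
    obtain ⟨w, hw⟩ := h _ hL.finite_range_leftQuotient Set.Subset.rfl
    exact ⟨w, fun u => hw u ⟨u, rfl⟩⟩
  intro s hfin
  induction s, hfin using Set.Finite.induction_on with
  | empty => exact fun _ => ⟨[], fun u hu => absurd hu (Set.notMem_empty _)⟩
  | insert _ _ ih =>
    intro hinsert
    obtain ⟨⟨u₀, rfl⟩, hs⟩ := Set.insert_subset_iff.1 hinsert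
    obtain ⟨w, hw⟩ := ih hs
    obtain ⟨t, ht⟩ := hext (u₀ ++ w)
    refine ⟨w ++ t, fun u hu => ?_⟩
    rw [← List.append_assoc]
    rcases hu with hu | hu
    · exact ht _ (by rw [Language.leftQuotient_append, Language.leftQuotient_append, hu])
    · exact hP _ _ (hw u hu)

end RegularLanguages

lemma IsRegLang.isRegular {W : Language X} (hW : IsRegLang W) : W.IsRegular := by
  induction hW with
  | finite W hW => exact isRegular_of_finite hW
  | union W V _ _ hW hV => exact hW.add hV
  | concat W V _ _ hW hV => exact isRegular_mul hW hV
  | star W _ hW => exact isRegular_kstar hW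

section Cylinders

variable {u v : List X} {ξ : ℕ → X}

lemma wcat_append (u v : List X) (ξ : ℕ → X) : wcat (u ++ v) ξ = wcat u (wcat v ξ) :=
  Stream'.append_append_stream u v ξ

lemma wcat_injective (u : List X) : Function.Injective (wcat u) :=
  fun ξ η => Stream'.append_right_injective u ξ η

lemma exists_wcat_eq (n : ℕ) (ξ : ℕ → X) : ∃ u η, u.length = n ∧ wcat u η = ξ :=
  ⟨Stream'.take n ξ, Stream'.drop n ξ, Stream'.length_take n ξ, Stream'.append_take_drop n ξ⟩

lemma wcat_mem_cyl (u : List X) (ξ : ℕ → X) : wcat u ξ ∈ cyl u :=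
  ⟨ξ, rfl⟩

lemma wcat_mem_cyl_append_iff : wcat u ξ ∈ cyl (u ++ v) ↔ ξ ∈ cyl v := by
  simp only [cyl, Set.mem_ofPred_eq, wcat_append, (wcat_injective u).eq_iff]

lemma cyl_subset_cyl (h : u <+: v) : cyl v ⊆ cyl u := by
  rintro _ ⟨η, rfl⟩
  obtain ⟨t, rfl⟩ := h
  exact ⟨wcat t η, wcat_append u t η⟩

lemma wcat_apply_of_lt (u : List X) (η : ℕ → X) {i : ℕ} (hi : i < u.length) : wcat u η i = u[i] :=
  Stream'.get_append_left i u η hi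

lemma mem_cyl_iff : ξ ∈ cyl u ↔ ∀ i (hi : i < u.length), ξ i = u[i] := by
  constructor
  · rintro ⟨η, rfl⟩ i hi
    exact wcat_apply_of_lt u η hi
  · intro h
    obtain ⟨v, η, hv, rfl⟩ := exists_wcat_eq u.length ξ
    obtain rfl : v = u := List.ext_getElem hv fun i hi hi' => by rw [← h i hi', wcat_apply_of_lt]
    exact wcat_mem_cyl v η

lemma prefix_of_mem_cyl (hu : ξ ∈ cyl u) (hv : ξ ∈ cyl v) (h : u.length ≤ v.length) :
    u <+: v :=
  List.prefix_iff_getElem.2 ⟨h, fun i hi => by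
    rw [← mem_cyl_iff.1 hu i hi, ← mem_cyl_iff.1 hv i (hi.trans_le h)]⟩

lemma cyl_eq_cylinder (u : List X) (η : ℕ → X) :
    cyl u = PiNat.cylinder (wcat u η) u.length := by
  ext ξ
  refine mem_cyl_iff.trans (forall₂_congr fun i hi => ?_)
  rw [wcat_apply_of_lt u η hi]

lemma catOmega_mono {W : Language X} {A B : Set (ℕ → X)} (h : A ⊆ B) :
    catOmega W A ⊆ catOmega W B := by
  rintro _ ⟨w, hw, η, hη, rfl⟩
  exact ⟨w, hw, η, h hη, rfl⟩

lemma catOmega_mul (W U : Language X) (A : Set (ℕ → X)) :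
    catOmega (W * U) A = catOmega W (catOmega U A) := by
  ext ξ
  constructor
  · rintro ⟨_, ⟨w, hw, u, hu, rfl⟩, η, hη, rfl⟩
    exact ⟨w, hw, _, ⟨u, hu, η, hη, rfl⟩, wcat_append w u η⟩
  · rintro ⟨w, hw, _, ⟨u, hu, η, hη, rfl⟩, rfl⟩
    exact ⟨w ++ u, Language.append_mem_mul hw hu, η, hη, (wcat_append w u η).symm⟩

lemma symmDiff_catOmega_subset (W : Language X) (A B : Set (ℕ → X)) :
    symmDiff (catOmega W A) (catOmega W B) ⊆ catOmega W (symmDiff A B) := by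
  rintro _ (⟨⟨w, hw, η, hη, rfl⟩, h⟩ | ⟨⟨w, hw, η, hη, rfl⟩, h⟩)
  · exact ⟨w, hw, η, Or.inl ⟨hη, fun hB => h ⟨w, hw, η, hB, rfl⟩⟩, rfl⟩
  · exact ⟨w, hw, η, Or.inr ⟨hη, fun hA => h ⟨w, hw, η, hA, rfl⟩⟩, rfl⟩

lemma catOmega_univ (W : Language X) : catOmega W Set.univ = ⋃ w ∈ W, cyl w := by
  ext ξ
  simp [catOmega, cyl]

end Cylinders

section Topology

lemma isTopologicalBasis_cyl [Nonempty X] :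
    @TopologicalSpace.IsTopologicalBasis _ (cantorTop X) (Set.range cyl) := by
  let : TopologicalSpace X := ⊥
  have : DiscreteTopology X := ⟨rfl⟩
  have hrange : Set.range (cyl (X := X)) = {U | ∃ ξ n, U = PiNat.cylinder ξ n} := by
    ext U
    constructor
    · rintro ⟨u, rfl⟩
      exact ⟨_, _, cyl_eq_cylinder u fun _ => Classical.arbitrary X⟩
    · rintro ⟨ξ, n, rfl⟩
      obtain ⟨u, η, rfl, rfl⟩ := exists_wcat_eq n ξ
      exact ⟨u, cyl_eq_cylinder u η⟩
  rw [hrange]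
  exact PiNat.isTopologicalBasis_cylinders fun _ : ℕ => X

lemma isOpen_catOmega_univ [Nonempty X] (W : Language X) :
    @IsOpen _ (cantorTop X) (catOmega W Set.univ) := by
  let := cantorTop X
  rw [catOmega_univ]
  exact isOpen_biUnion fun w _ => isTopologicalBasis_cyl.isOpen ⟨w, rfl⟩

lemma isNowhereDense_of_forall_exists_disjoint_cyl [Nonempty X] {A : Set (ℕ → X)}
    (hA : ∀ u, ∃ t, Disjoint A (cyl (u ++ t))) : @IsNowhereDense _ (cantorTop X) A := by
  let := cantorTop X
  by_contra hne
  obtain ⟨_, ⟨u, rfl⟩, -, hu⟩ := isTopologicalBasis_cyl.exists_nonempty_subset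
    (Set.nonempty_iff_ne_empty.2 hne) isOpen_interior
  obtain ⟨t, ht⟩ := hA u
  have hcl : Disjoint (closure A) (cyl (u ++ t)) :=
    ht.closure_left (isTopologicalBasis_cyl.isOpen ⟨_, rfl⟩)
  have hmem := wcat_mem_cyl (u ++ t) fun _ => Classical.arbitrary X
  exact hcl.notMem_of_mem_right hmem
    (interior_subset (hu (cyl_subset_cyl (List.prefix_append u t) hmem)))

end Topology

section OmegaPower

variable {V : Language X} {A : Set (ℕ → X)} {u x : List X} {ξ : ℕ → X}

lemma subset_omegaPow (hA : A ⊆ catOmega (V - 1) A) : A ⊆ omegaPow V := by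
  intro ξ hξ
  have hsplit : ∀ ξ ∈ A, ∃ v ∈ V - 1, ∃ η ∈ A, ξ = wcat v η := fun _ h => hA h
  choose! v hv tail htail heq using hsplit
  have hiter (k : ℕ) : tail^[k] ξ ∈ A := by
    induction k with
    | zero => exact hξ
    | succ k ih => exact Function.iterate_succ_apply' tail k ξ ▸ htail _ ih
  refine ⟨fun k => v (tail^[k] ξ), fun k => hv _ (hiter k), fun k => ⟨tail^[k] ξ, ?_⟩⟩
  induction k with
  | zero => rfl
  | succ k ih =>
    rw [List.range_succ, List.map_append, List.flatten_append, wcat_append,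
      Function.iterate_succ_apply', List.map_singleton, List.flatten_singleton,
      ← heq _ (hiter k), ← ih]

lemma omegaPow_subset_catOmega (V : Language X) : omegaPow V ⊆ catOmega (V - 1) (omegaPow V) := by
  rintro ξ ⟨f, hf, hξ⟩
  obtain ⟨η, rfl⟩ : ξ ∈ cyl (f 0) := by simpa using hξ 1
  refine ⟨f 0, hf 0, η, ⟨fun k => f (k + 1), fun k => hf (k + 1), fun k => ?_⟩, rfl⟩
  have h := hξ (k + 1)
  rw [List.range_succ_eq_map, List.map_cons, List.flatten_cons, List.map_map] at h
  exact wcat_mem_cyl_append_iff.1 h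

lemma omegaPow_eq_catOmega (V : Language X) : omegaPow V = catOmega (V - 1) (omegaPow V) :=
  (omegaPow_subset_catOmega V).antisymm <|
    subset_omegaPow (catOmega_mono (omegaPow_subset_catOmega V))

lemma wcat_mem_omegaPow_of_mem_kstar (hx : x ∈ V∗) (hξ : ξ ∈ omegaPow V) :
    wcat x ξ ∈ omegaPow V := by
  obtain ⟨S, rfl, hS⟩ := Language.mem_kstar_iff_exists_nonempty.1 hx
  clear hx
  induction S with
  | nil => exact hξ
  | cons v S ih =>
    simp only [List.mem_cons, forall_eq_or_imp] at hS
    rw [omegaPow_eq_catOmega, List.flatten_cons, wcat_append]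
    exact ⟨v, hS.1, _, ih hS.2, rfl⟩

lemma omegaPow_nonempty {v : List X} (hv : v ∈ V - 1) : (omegaPow V).Nonempty := by
  have hcycle : {Stream'.cycle v hv.2} ⊆ omegaPow V :=
    subset_omegaPow fun _ hξ => ⟨v, hv, _, rfl, hξ.trans (Stream'.cycle_eq v hv.2)⟩
  exact ⟨_, hcycle rfl⟩

lemma exists_append_mem_kstar_of_mem_omegaPow (hξ : ξ ∈ omegaPow V) (hu : ξ ∈ cyl u) :
    ∃ z ≠ [], u ++ z ∈ V∗ := by
  induction hn : u.length using Nat.strong_induction_on generalizing u ξ with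
  | _ n ih =>
    obtain ⟨v, ⟨hvV, hv⟩, η, hη, rfl⟩ := omegaPow_subset_catOmega V hξ
    rcases lt_or_ge u.length v.length with hlt | hle
    · obtain ⟨z, rfl⟩ := prefix_of_mem_cyl hu (wcat_mem_cyl v η) hlt.le
      exact ⟨z, by rintro rfl; simp at hlt, mem_kstar_of_mem hvV⟩
    · obtain ⟨s, rfl⟩ := prefix_of_mem_cyl (wcat_mem_cyl v η) hu hle
      have hpos : 0 < v.length := List.length_pos_iff.2 hv
      obtain ⟨z, hz, hsz⟩ := ih s.length (by grind) hη (wcat_mem_cyl_append_iff.1 hu) rfl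
      exact ⟨z, hz, by
        simpa only [List.append_assoc] using append_mem_kstar (mem_kstar_of_mem hvV) hsz⟩

lemma disjoint_omegaPow_cyl_iff :
    Disjoint (omegaPow V) (cyl u) ↔ ∀ z ∈ (V∗).leftQuotient u, z = [] := by
  constructor
  · intro h z hz
    by_contra hne
    obtain ⟨v, hv, -⟩ := exists_mem_append_eq_of_mem_kstar hz (by simp [hne])
    obtain ⟨ξ, hξ⟩ := omegaPow_nonempty hv
    exact h.notMem_of_mem_left (wcat_mem_omegaPow_of_mem_kstar hz hξ)
      (cyl_subset_cyl (List.prefix_append u z) (wcat_mem_cyl _ ξ))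
  · intro h
    refine Set.disjoint_left.2 fun ξ hξ hu => ?_
    obtain ⟨z, hne, hz⟩ := exists_append_mem_kstar_of_mem_omegaPow hξ hu
    exact hne (h z hz)

end OmegaPower

section Letters

/-- The alphabet viewed as a language: the words of length one. It provides `X* = (letters X)∗` and
`X^ω = omegaPow (letters X)`, which are needed to write regular expressions. -/
def letters (X : Type) : Language X := {l | l.length = 1}

lemma isRegLang_letters [Finite X] : IsRegLang (letters X) :=
  .finite _ (List.finite_length_eq X 1)

lemma kstar_letters : (letters X)∗ = ⊤ := by
  refine eq_top_iff.2 fun l _ => Language.mem_kstar.2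
    ⟨l.map fun a => [a], (List.flatMap_singleton' l).symm, fun y hy => ?_⟩
  obtain ⟨a, -, rfl⟩ := List.mem_map.1 hy
  rfl

lemma isRegLang_top [Finite X] : IsRegLang (⊤ : Language X) :=
  kstar_letters (X := X) ▸ .star _ isRegLang_letters

lemma omegaPow_letters : omegaPow (letters X) = Set.univ := by
  refine Set.univ_subset_iff.1 (subset_omegaPow fun ξ _ => ?_)
  obtain ⟨v, η, hv, rfl⟩ := exists_wcat_eq 1 ξ
  exact ⟨v, ⟨hv, List.ne_nil_of_length_pos (by omega)⟩, η, trivial, rfl⟩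

end Letters

section TailAvoiding

variable {w : List X} {ξ η : ℕ → X}

/-- The language `X^|w| ∖ {w}` of blocks of the length of `w` other than `w`. -/
def blocksNe (w : List X) : Language X := {l | l.length = w.length ∧ l ≠ w}

/-- The ω-language `X*·(X^|w| ∖ {w})^ω`, which serves as the exceptional set of first category.
Only occurrences of `w` aligned with the blocks are excluded, so an element may still contain `w`
infinitely often; what matters is that every tail of an ω-word outside of it contains `w`. -/
def tailAvoiding (w : List X) : Set (ℕ → X) := catOmega ⊤ (omegaPow (blocksNe w))

lemma isRegLang_blocksNe [Finite X] (w : List X) : IsRegLang (blocksNe w) :=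
  .finite _ ((List.finite_length_eq X w.length).subset fun _ hl => hl.1)

lemma catOmega_tailAvoiding_subset (W : Language X) (w : List X) :
    catOmega W (tailAvoiding w) ⊆ tailAvoiding w := by
  rw [tailAvoiding, ← catOmega_mul]
  rintro _ ⟨u, -, η, hη, rfl⟩
  exact ⟨u, trivial, η, hη, rfl⟩

lemma wcat_mem_tailAvoiding (u : List X) (hξ : ξ ∈ tailAvoiding w) :
    wcat u ξ ∈ tailAvoiding w :=
  catOmega_tailAvoiding_subset {u} w ⟨u, rfl, ξ, hξ, rfl⟩

lemma compl_infixOcc_subset_omegaPow_blocksNe (w : List X) :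
    (infixOcc w)ᶜ ⊆ omegaPow (blocksNe w) := by
  refine subset_omegaPow fun ξ hξ => ?_
  obtain ⟨v, η, hv, rfl⟩ := exists_wcat_eq w.length ξ
  have hvw : v ≠ w := by
    rintro rfl
    exact hξ ⟨[], wcat_mem_cyl v η⟩
  have hne : v ≠ [] := by
    rintro rfl
    exact hvw (List.length_eq_zero_iff.1 hv.symm).symm
  refine ⟨v, ⟨⟨hv, hvw⟩, hne⟩, η, ?_, rfl⟩
  rintro ⟨u, hu⟩
  exact hξ ⟨v ++ u, by rwa [List.append_assoc, wcat_mem_cyl_append_iff]⟩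

lemma compl_tailAvoiding_subset_infixOcc (w : List X) : (tailAvoiding w)ᶜ ⊆ infixOcc w :=
  Set.compl_subset_comm.1 fun ξ hξ =>
    ⟨[], trivial, ξ, compl_infixOcc_subset_omegaPow_blocksNe w hξ, rfl⟩

lemma notMem_cyl_append_of_mem_omegaPow_blocksNe {s : List X} {k : ℕ}
    (hs : s.length = k * w.length) (hη : η ∈ omegaPow (blocksNe w)) : η ∉ cyl (s ++ w) := by
  induction k generalizing s η with
  | zero =>
    intro hsw
    obtain ⟨v, ⟨⟨hv, hvw⟩, -⟩, ζ, -, rfl⟩ := omegaPow_subset_catOmega _ hη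
    obtain rfl : s = [] := List.length_eq_zero_iff.1 (by simpa using hs)
    exact hvw ((prefix_of_mem_cyl (wcat_mem_cyl v ζ) hsw hv.le).eq_of_length hv)
  | succ k ih =>
    intro hsw
    obtain ⟨v, ⟨⟨hv, -⟩, -⟩, ζ, hζ, rfl⟩ := omegaPow_subset_catOmega _ hη
    obtain ⟨s, rfl⟩ := prefix_of_mem_cyl (wcat_mem_cyl v ζ)
      (cyl_subset_cyl (List.prefix_append s w) hsw) (by grind)
    rw [List.append_assoc, wcat_mem_cyl_append_iff] at hsw
    exact ih (by grind) hζ hsw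

lemma isNowhereDense_image_omegaPow_blocksNe [Nonempty X] (x w : List X) :
    @IsNowhereDense _ (cantorTop X) (wcat x '' omegaPow (blocksNe w)) := by
  refine isNowhereDense_of_forall_exists_disjoint_cyl fun u => ?_
  -- The padding places `w` right after `x` followed by `|u|` full blocks.
  let pad := List.replicate (x.length + u.length * w.length - u.length) (Classical.arbitrary X)
  refine ⟨pad ++ w, Set.disjoint_left.2 ?_⟩
  rintro _ ⟨η, hη, rfl⟩ hmem
  obtain ⟨v, ⟨⟨hv, -⟩, hne⟩, -⟩ := omegaPow_subset_catOmega _ hη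
  have hle : u.length ≤ u.length * w.length :=
    Nat.le_mul_of_pos_right _ (hv ▸ List.length_pos_iff.2 hne)
  have hlen : (u ++ pad).length = x.length + u.length * w.length := by
    simp only [List.length_append, List.length_replicate, pad]
    omega
  rw [← List.append_assoc] at hmem
  obtain ⟨s, hs⟩ := prefix_of_mem_cyl (wcat_mem_cyl x η)
    (cyl_subset_cyl (List.prefix_append _ w) hmem) (by omega)
  rw [← hs, List.append_assoc, wcat_mem_cyl_append_iff] at hmem
  rw [← hs, List.length_append] at hlen
  exact notMem_cyl_append_of_mem_omegaPow_blocksNe (Nat.add_left_cancel hlen) hη hmem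

lemma isMeagre_tailAvoiding [Countable X] [Nonempty X] (w : List X) :
    @IsMeagre _ (cantorTop X) (tailAvoiding w) := by
  let := cantorTop X
  have hUnion : tailAvoiding w = ⋃ x, wcat x '' omegaPow (blocksNe w) := by
    ext ξ
    rw [Set.mem_iUnion]
    constructor
    · rintro ⟨x, -, η, hη, rfl⟩
      exact ⟨x, η, hη, rfl⟩
    · rintro ⟨x, η, hη, rfl⟩
      exact ⟨x, trivial, η, hη, rfl⟩
  rw [hUnion]
  exact isMeagre_iUnion fun x => (isNowhereDense_image_omegaPow_blocksNe x w).isMeagre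

end TailAvoiding

section Approximation

variable {V W : Language X} {p w : List X}

lemma exists_forall_disjoint_omegaPow_cyl (hV : IsRegLang V)
    (h : ∀ u, ∃ t, Disjoint (omegaPow V) (cyl (u ++ t))) :
    ∃ w, ∀ u, Disjoint (omegaPow V) (cyl (u ++ w)) := by
  refine exists_forall_append_of_isRegular (P := fun u => Disjoint (omegaPow V) (cyl u))
    hV.star.isRegular ?_ fun u => ?_
  · exact fun u t hu => hu.mono_right (cyl_subset_cyl (List.prefix_append u t))
  obtain ⟨t, ht⟩ := h u
  refine ⟨t, fun u' hu' => ?_⟩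
  rwa [disjoint_omegaPow_cyl_iff, Language.leftQuotient_append, hu',
    ← Language.leftQuotient_append, ← disjoint_omegaPow_cyl_iff]

lemma exists_forall_disjoint_or_prefix (hV : IsRegLang V) (p : List X) :
    ∃ w, ∀ u, Disjoint (omegaPow V) (cyl (u ++ w)) ∨
      ∃ x ∈ V∗, x ≠ [] ∧ x ++ p <+: u ++ w := by
  refine exists_forall_append_of_isRegular
    (P := fun u => Disjoint (omegaPow V) (cyl u) ∨ ∃ x ∈ V∗, x ≠ [] ∧ x ++ p <+: u)
    hV.star.isRegular ?_ fun u => ?_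
  · rintro u t (hu | ⟨x, hx, hne, hp⟩)
    · exact Or.inl (hu.mono_right (cyl_subset_cyl (List.prefix_append u t)))
    · exact Or.inr ⟨x, hx, hne, hp.trans (List.prefix_append u t)⟩
  by_cases hu : ∀ z ∈ (V∗).leftQuotient u, z = []
  · refine ⟨[], fun u' hu' => Or.inl ?_⟩
    rwa [List.append_nil, disjoint_omegaPow_cyl_iff, hu']
  · push Not at hu
    obtain ⟨z, hz, hne⟩ := hu
    refine ⟨z ++ p, fun u' hu' => Or.inr ⟨u' ++ z, ?_, by simp [hne], by simp⟩⟩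
    rwa [← hu'] at hz

lemma not_disjoint_omegaPow_cyl_of_mem_catOmega (hp : ∀ t, ¬ Disjoint (omegaPow V) (cyl (p ++ t)))
    {ξ : ℕ → X} (hξ : ξ ∈ catOmega (V∗ * {p}) Set.univ) {u : List X} (hu : ξ ∈ cyl u) :
    ¬ Disjoint (omegaPow V) (cyl u) := by
  rw [catOmega_mul] at hξ
  obtain ⟨x, hx, _, ⟨q, hq, η, -, rfl⟩, rfl⟩ := hξ
  obtain rfl : p = q := hq.symm
  have hdense (t : List X) : ¬ Disjoint (omegaPow V) (cyl (x ++ p ++ t)) := by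
    obtain ⟨ζ, hζ, hζt⟩ := Set.not_disjoint_iff.1 (hp t)
    refine Set.not_disjoint_iff.2 ⟨wcat x ζ, wcat_mem_omegaPow_of_mem_kstar hx hζ, ?_⟩
    rwa [List.append_assoc, wcat_mem_cyl_append_iff]
  have hxp : wcat x (wcat p η) ∈ cyl (x ++ p) := ⟨η, (wcat_append x p η).symm⟩
  rcases le_total u.length (x ++ p).length with hle | hle
  · exact fun h => hdense [] <| h.mono_right <| cyl_subset_cyl <| by
      simpa using prefix_of_mem_cyl hu hxp hle
  · obtain ⟨t, rfl⟩ := prefix_of_mem_cyl hxp hu hle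
    exact hdense t

lemma omegaPow_diff_tailAvoiding_subset
    (hw : ∀ u, Disjoint (omegaPow V) (cyl (u ++ w)) ∨ ∃ x ∈ V∗, x ++ p <+: u ++ w) :
    omegaPow V \ tailAvoiding w ⊆ catOmega (V∗ * {p}) Set.univ := by
  rintro ξ ⟨hξ, hav⟩
  obtain ⟨u, hu⟩ := compl_tailAvoiding_subset_infixOcc w hav
  rcases hw u with hdisj | ⟨x, hx, hxp⟩
  · exact absurd hu (hdisj.notMem_of_mem_left hξ)
  · obtain ⟨η, hη⟩ := cyl_subset_cyl hxp hu
    exact ⟨x ++ p, Language.append_mem_mul hx rfl, η, trivial, hη⟩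

lemma catOmega_diff_tailAvoiding_subset
    (hp : ∀ t, ¬ Disjoint (omegaPow V) (cyl (p ++ t)))
    (hw : ∀ u, Disjoint (omegaPow V) (cyl (u ++ w)) ∨ ∃ x ∈ V∗, x ≠ [] ∧ x ++ p <+: u ++ w) :
    catOmega (V∗ * {p}) Set.univ \ tailAvoiding w ⊆ omegaPow V := by
  refine subset_omegaPow ?_
  rintro ξ ⟨hξ, hav⟩
  obtain ⟨u, hu⟩ := compl_tailAvoiding_subset_infixOcc w hav
  have hmeets := not_disjoint_omegaPow_cyl_of_mem_catOmega hp hξ hu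
  obtain ⟨x, hx, hne, hxp⟩ := (hw u).resolve_left hmeets
  obtain ⟨v, hv, y, hy, rfl⟩ := exists_mem_append_eq_of_mem_kstar hx hne
  obtain ⟨η, rfl⟩ := cyl_subset_cyl hxp hu
  rw [List.append_assoc, wcat_append] at hav ⊢
  exact ⟨v, hv, _, ⟨⟨y ++ p, Language.append_mem_mul hy rfl, η, trivial, rfl⟩,
    fun h => hav (wcat_mem_tailAvoiding v h)⟩, rfl⟩

lemma exists_symmDiff_omegaPow_subset (hV : IsRegLang V) :
    ∃ U w, IsRegLang U ∧ symmDiff (omegaPow V) (catOmega U Set.univ) ⊆ tailAvoiding w := by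
  by_cases h : ∀ u, ∃ t, Disjoint (omegaPow V) (cyl (u ++ t))
  · obtain ⟨w, hw⟩ := exists_forall_disjoint_omegaPow_cyl hV h
    refine ⟨0, w, .finite _ Set.finite_empty, ?_⟩
    rintro ξ (⟨hξ, -⟩ | ⟨⟨x, hx, -⟩, -⟩)
    · by_contra hav
      obtain ⟨u, hu⟩ := compl_tailAvoiding_subset_infixOcc w hav
      exact (hw u).notMem_of_mem_left hξ hu
    · exact absurd hx (Language.notMem_zero x)
  · push Not at h
    obtain ⟨p, hp⟩ := h
    obtain ⟨w, hw⟩ := exists_forall_disjoint_or_prefix hV p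
    refine ⟨V∗ * {p}, w, .concat _ _ (.star _ hV) (.finite _ (Set.finite_singleton p)), ?_⟩
    refine Set.union_subset (Set.sdiff_subset_comm.1 ?_) (Set.sdiff_subset_comm.1 ?_)
    · exact omegaPow_diff_tailAvoiding_subset fun u =>
        (hw u).imp_right fun ⟨x, hx, _, hxp⟩ => ⟨x, hx, hxp⟩
    · exact catOmega_diff_tailAvoiding_subset hp hw

lemma exists_symmDiff_catOmega_omegaPow_subset (hW : IsRegLang W) (hV : IsRegLang V) :
    ∃ U w, IsRegLang U ∧
      symmDiff (catOmega W (omegaPow V)) (catOmega U Set.univ) ⊆ tailAvoiding w := by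
  obtain ⟨U, w, hU, hUw⟩ := exists_symmDiff_omegaPow_subset hV
  refine ⟨W * U, w, .concat _ _ hW hU, ?_⟩
  rw [catOmega_mul]
  exact (symmDiff_catOmega_subset W _ _).trans <|
    (catOmega_mono hUw).trans (catOmega_tailAvoiding_subset W w)

end Approximation

theorem stmt9 {X : Type} [Fintype X] (hX : 2 ≤ Fintype.card X)
    (F : Set (ℕ → X)) (hreg : IsRegOmega F) :
    HasABP F := by
  have : Nonempty X := Fintype.card_pos_iff.1 (by omega)
  obtain ⟨n, W, V, hWV, rfl⟩ := hreg
  choose U w hU hUw using fun i => exists_symmDiff_catOmega_omegaPow_subset (hWV i).1 (hWV i).2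
  refine ⟨⋃ i, catOmega (U i) Set.univ, ⋃ i, tailAvoiding (w i), ?_, ?_, ?_, ?_, ?_⟩
  · exact ⟨n, U, fun _ => letters X, fun i => ⟨hU i, isRegLang_letters⟩,
      by simp only [omegaPow_letters]⟩
  · exact let := cantorTop X; isOpen_iUnion fun i => isOpen_catOmega_univ (U i)
  · exact ⟨n, fun _ => ⊤, fun i => blocksNe (w i),
      fun i => ⟨isRegLang_top, isRegLang_blocksNe (w i)⟩, rfl⟩
  · exact let := cantorTop X; isMeagre_iUnion fun i => isMeagre_tailAvoiding (w i)
  · exact Set.iUnion_symmDiff_iUnion_subset.trans (Set.iUnion_mono hUw)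

end AutoBaire
end

section
/- Let F ⊆ X^ω be of first Baire category. Then F has the Automatic Baire property if and only if F ⊆ F' for some regular ω-language F' of first Baire category. -/
open Set MeasureTheory Computability

namespace AutoBaire

variable {X : Type}

/-
A meagre set agrees with a regular open set `E` up to a meagre error only if `E` is itself meagre,
and then `E = ∅` because the space of ω-words is a Baire space. So for meagre sets the
approximating open set in the Automatic Baire property is forced to be empty.
-/

section BaireSpace

variable {α : Type*} [TopologicalSpace α] {s t : Set α}

theorem isMeagre_of_isMeagre_symmDiff (hs : IsMeagre s) (hst : IsMeagre (symmDiff s t)) :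
    IsMeagre t :=
  (hst.union hs).mono (le_symmDiff_sup_left s t)

theorem eq_empty_of_isOpen_of_isMeagre [BaireSpace α] (ho : IsOpen s) (hs : IsMeagre s) :
    s = ∅ :=
  not_nonempty_iff_eq_empty.mp fun hne ↦ not_isMeagre_of_isOpen ho hne hs

end BaireSpace

theorem isRegOmega_empty : IsRegOmega (∅ : Set (ℕ → X)) :=
  ⟨0, Fin.elim0, Fin.elim0, fun i ↦ i.elim0, (iUnion_of_empty _).symm⟩

theorem hasABP_of_subset {F F' : Set (ℕ → X)} (hreg : IsRegOmega F')
    (hmeagre : @IsMeagre _ (cantorTop X) F') (hsub : F ⊆ F') : HasABP F :=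
  ⟨∅, F', isRegOmega_empty, @isOpen_empty _ (cantorTop X), hreg, hmeagre,
    (symmDiff_bot F).trans_subset hsub⟩

theorem baireSpace_cantorTop (X : Type) : @BaireSpace (ℕ → X) (cantorTop X) :=
  letI : TopologicalSpace X := ⊥
  haveI : DiscreteTopology X := ⟨rfl⟩
  (inferInstance : BaireSpace (ℕ → X))

theorem HasABP.exists_isRegOmega_isMeagre_superset {F : Set (ℕ → X)} (hF : HasABP F)
    (hm : @IsMeagre _ (cantorTop X) F) :
    ∃ F' : Set (ℕ → X), IsRegOmega F' ∧ @IsMeagre _ (cantorTop X) F' ∧ F ⊆ F' := by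
  let := cantorTop X
  have := baireSpace_cantorTop X
  obtain ⟨E, F', -, hEopen, hreg, hmeagre, hsub⟩ := hF
  have hEmeagre : IsMeagre E := isMeagre_of_isMeagre_symmDiff hm (hmeagre.mono hsub)
  obtain rfl : E = ∅ := eq_empty_of_isOpen_of_isMeagre hEopen hEmeagre
  exact ⟨F', hreg, hmeagre, (symmDiff_bot F).symm.trans_subset hsub⟩

theorem stmt12_general {X : Type} (F : Set (ℕ → X)) (hm : @IsMeagre _ (cantorTop X) F) :
    HasABP F ↔
      ∃ F' : Set (ℕ → X), IsRegOmega F' ∧ @IsMeagre _ (cantorTop X) F' ∧ F ⊆ F' :=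
  ⟨fun hF ↦ hF.exists_isRegOmega_isMeagre_superset hm,
    fun ⟨_, hreg, hmeagre, hsub⟩ ↦ hasABP_of_subset hreg hmeagre hsub⟩

theorem stmt12 {X : Type} [Fintype X] (hX : 2 ≤ Fintype.card X)
    (F : Set (ℕ → X)) (hm : @IsMeagre _ (cantorTop X) F) :
    HasABP F ↔
      ∃ F' : Set (ℕ → X), IsRegOmega F' ∧ @IsMeagre _ (cantorTop X) F' ∧ F ⊆ F' :=
  stmt12_general F hm

end AutoBaire
end
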